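/- arXiv:1610.01987 — 2 statements merged into one kernel-verified Lean document; each statement's English description precedes it below -/
import Mathlib

section
/- For every integer n ≥ 1, d_n = Der_n + Der_{n−1}; that is, the number of arrangements of {1,…,n} avoiding all patterns 12, 23, …, (n−1)n equals the sum of the n-th and (n−1)-st derangement numbers. -/
/-- The arrangement (one-line notation) of `σ` avoids all patterns
`12, 23, …, (n-1)n`: digit `i` (encoded as the value `i-1` in `Fin n`)
is never immediately followed by digit `i+1`. -/
def avoidsSucc (n : ℕ) (σ : Equiv.Perm (Fin n)) : Prop :=
  ∀ (k : ℕ) (h : k + 1 < n),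
    (σ ⟨k + 1, h⟩).val ≠ (σ ⟨k, Nat.lt_of_succ_lt h⟩).val + 1

/-- The arrangement of `σ` contains the pattern `n1`: digit `n` (value `n-1`)
is immediately followed by digit `1` (value `0`). -/
def containsN1 (n : ℕ) (σ : Equiv.Perm (Fin n)) : Prop :=
  ∃ (k : ℕ) (h : k + 1 < n),
    (σ ⟨k, Nat.lt_of_succ_lt h⟩).val = n - 1 ∧ (σ ⟨k + 1, h⟩).val = 0

/-- `dCount n` = number of arrangements of `{1,…,n}` avoiding `12, 23, …, (n-1)n`. -/
noncomputable def dCount (n : ℕ) : ℕ :=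
  Nat.card {σ : Equiv.Perm (Fin n) // avoidsSucc n σ}

/-- `DCount n` = number of arrangements of `{1,…,n}` avoiding `12, 23, …, (n-1)n, n1`. -/
noncomputable def DCount (n : ℕ) : ℕ :=
  Nat.card {σ : Equiv.Perm (Fin n) // avoidsSucc n σ ∧ ¬ containsN1 n σ}

/-!
Every word in the letters `0, …, n` arises from one in `0, …, n - 1` by raising each letter by one
and inserting a new smallest letter `0`, either right before some letter or at the end. Likewise
every permutation arises by inserting `0` into the cycle notation, either right before some letter
or as a new fixed point. Making the same choice on both sides has the same effect on the relations
that `y` immediately follows `x` in the word, and that the permutation maps `x` to `y`, as long as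
`x < y`. Hence words in which `i + 1` never immediately follows `i` correspond to permutations that
never map `i` to `i + 1`. Composing with the inverse of the rotation `i ↦ i + 1` turns these into
the permutations without fixed points other than the largest letter, which are derangements of all
letters or, when the largest letter is fixed, of the remaining ones.
-/

open Equiv Equiv.Perm Function

section Words

variable {n : ℕ}

lemma covBy_succAbove_iff {k : Fin (n + 1)} {a : Fin n} :
    k ⋖ k.succAbove a ↔ k = a.castSucc := by
  rw [Fin.covBy_iff, Order.covBy_iff_add_one_eq, Fin.ext_iff]
  grind [Fin.succAbove]

lemma succAbove_covBy_succAbove_iff {k : Fin (n + 1)} {a b : Fin n} :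
    k.succAbove a ⋖ k.succAbove b ↔ a ⋖ b ∧ k ≠ b.castSucc := by
  rw [Fin.covBy_iff, Fin.covBy_iff, Order.covBy_iff_add_one_eq, Order.covBy_iff_add_one_eq, Ne,
    Fin.ext_iff]
  grind [Fin.succAbove]

/-- The permutation that sends `0` to `k` and is order-isomorphic to `σ` on the other arguments. -/
def consPerm (k : Fin (n + 1)) (σ : Perm (Fin n)) : Perm (Fin (n + 1)) :=
  (finSuccEquiv n).trans ((optionCongr σ).trans (finSuccEquiv' k).symm)

@[simp]
lemma consPerm_zero (k : Fin (n + 1)) (σ : Perm (Fin n)) : consPerm k σ 0 = k := by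
  simp [consPerm]

@[simp]
lemma consPerm_succ (k : Fin (n + 1)) (σ : Perm (Fin n)) (x : Fin n) :
    consPerm k σ x.succ = k.succAbove (σ x) := by
  simp [consPerm]

lemma consPerm_injective2 : Injective2 (consPerm (n := n)) := by
  intro k k' σ σ' h
  obtain rfl : k = k' := by simpa using DFunLike.congr_fun h 0
  refine ⟨rfl, Equiv.ext fun x ↦ ?_⟩
  simpa using DFunLike.congr_fun h x.succ

lemma consPerm_last_eq_castSucc_iff {p : Fin (n + 1)} {σ : Perm (Fin n)} {y : Fin n} :
    consPerm (Fin.last n) σ p = (σ y).castSucc ↔ p = y.succ := by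
  rw [← Fin.succAbove_last_apply, ← consPerm_succ, EmbeddingLike.apply_eq_iff_eq]

/-- Insertion of a new smallest letter `0` into the word whose letter `x` stands at position `σ x`:
right before the old letter `x` if `p = x.succ`, at the end if `p = 0`. -/
def insertZero (p : Fin (n + 1)) (σ : Perm (Fin n)) : Perm (Fin (n + 1)) :=
  consPerm (consPerm (Fin.last n) σ p) σ

lemma insertZero_injective2 : Injective2 (insertZero (n := n)) := by
  intro p p' σ σ' h
  obtain ⟨hslot, rfl⟩ := consPerm_injective2 h
  exact ⟨(consPerm (Fin.last n) σ).injective hslot, rfl⟩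

lemma insertZero_zero_covBy_succ_iff {p : Fin (n + 1)} {σ : Perm (Fin n)} {y : Fin n} :
    insertZero p σ 0 ⋖ insertZero p σ y.succ ↔ p = y.succ := by
  rw [insertZero, consPerm_zero, consPerm_succ, covBy_succAbove_iff, consPerm_last_eq_castSucc_iff]

lemma insertZero_succ_covBy_succ_iff {p : Fin (n + 1)} {σ : Perm (Fin n)} {x y : Fin n} :
    insertZero p σ x.succ ⋖ insertZero p σ y.succ ↔ σ x ⋖ σ y ∧ p ≠ y.succ := by
  rw [insertZero, consPerm_succ, consPerm_succ, succAbove_covBy_succAbove_iff, Ne,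
    consPerm_last_eq_castSucc_iff]

/-- `insertZero` as a bijection: every word arises from exactly one insertion. -/
noncomputable def insertZeroEquiv (n : ℕ) :
    Fin (n + 1) × Perm (Fin n) ≃ Perm (Fin (n + 1)) :=
  Equiv.ofBijective (uncurry insertZero) <| by
    rw [Fintype.bijective_iff_injective_and_card]
    exact ⟨insertZero_injective2.uncurry, by simp [Fintype.card_perm, Nat.factorial_succ]⟩

lemma insertZeroEquiv_apply (p : Fin (n + 1)) (σ : Perm (Fin n)) :
    insertZeroEquiv n (p, σ) = insertZero p σ :=
  rfl

end Words

lemma decomposeFin_symm_succ_eq_succ_iff {n : ℕ} {p : Fin (n + 1)} {τ : Perm (Fin n)}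
    {x y : Fin n} :
    decomposeFin.symm (p, τ) x.succ = y.succ ↔ τ x = y ∧ p ≠ y.succ := by
  rw [decomposeFin_symm_apply_succ, swap_apply_eq_iff]
  by_cases hp : p = y.succ
  · simp [hp]
  · simp [swap_apply_of_ne_of_ne (Fin.succ_ne_zero y) (Ne.symm hp), hp]

/-- A bijection of Foata type: it trades insertions of `0` into a word for insertions of `0` into a
cycle (`decomposeFin.symm (p, τ)` puts `0` right before `p`), so that ascending adjacencies of the
word become excedances of the permutation. -/
noncomputable def adjacencyToExcedance : (n : ℕ) → Perm (Fin n) ≃ Perm (Fin n)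
  | 0 => Equiv.refl _
  | n + 1 => (insertZeroEquiv n).symm.trans
      (((Equiv.refl _).prodCongr (adjacencyToExcedance n)).trans decomposeFin.symm)

lemma adjacencyToExcedance_insertZero {n : ℕ} (p : Fin (n + 1)) (σ : Perm (Fin n)) :
    adjacencyToExcedance (n + 1) (insertZero p σ) =
      decomposeFin.symm (p, adjacencyToExcedance n σ) := by
  simp [← insertZeroEquiv_apply, adjacencyToExcedance]

theorem adjacencyToExcedance_apply_eq_iff {n : ℕ} (σ : Perm (Fin n)) {x y : Fin n} (hxy : x < y) :
    adjacencyToExcedance n σ x = y ↔ σ x ⋖ σ y := by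
  induction n with
  | zero => exact x.elim0
  | succ n ih =>
    obtain ⟨⟨p, σ⟩, rfl⟩ := (insertZeroEquiv n).surjective σ
    obtain ⟨y, rfl⟩ := Fin.exists_succ_eq.2 (Fin.ne_zero_of_lt hxy)
    rw [insertZeroEquiv_apply, adjacencyToExcedance_insertZero]
    cases x using Fin.cases with
    | zero => rw [decomposeFin_symm_apply_zero, insertZero_zero_covBy_succ_iff]
    | succ x =>
      rw [decomposeFin_symm_succ_eq_succ_iff, insertZero_succ_covBy_succ_iff,
        ih σ (Fin.succ_lt_succ_iff.1 hxy)]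

/-- A pattern `i (i + 1)` at position `k` of `σ` is a pattern `k (k + 1)` at position `i` of `σ⁻¹`,
so `σ` may be read as the map from letters to positions, as in `insertZero`. -/
lemma avoidsSucc_iff_forall_not_covBy {m : ℕ} {σ : Perm (Fin (m + 1))} :
    avoidsSucc (m + 1) σ ↔ ∀ i : Fin m, ¬ σ i.castSucc ⋖ σ i.succ := by
  simp only [Fin.covBy_iff, Order.covBy_iff_add_one_eq]
  exact ⟨fun h i hi ↦ h i (by omega) hi.symm, fun h k hk hk' ↦ h ⟨k, by omega⟩ hk'.symm⟩

lemma fixedPoints_finRotate_inv_mul_subset_iff {m : ℕ} {τ : Perm (Fin (m + 1))} :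
    fixedPoints ((finRotate (m + 1))⁻¹ * τ) ⊆ {Fin.last m} ↔
      ∀ i : Fin m, τ i.castSucc ≠ i.succ := by
  have isFixedPt_iff (i : Fin m) :
      IsFixedPt ((finRotate (m + 1))⁻¹ * τ) i.castSucc ↔ τ i.castSucc = i.succ := by
    rw [IsFixedPt, Perm.mul_apply, Perm.inv_eq_iff_eq, finRotate_apply,
      Fin.coeSucc_eq_succ]
  simp [Set.subset_def, Fin.forall_fin_succ', isFixedPt_iff, -Perm.coe_mul]

lemma card_perm_fixedPoints_subset_singleton {α : Type*} [Fintype α] (a : α) :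
    Nat.card {f : Perm α // fixedPoints f ⊆ {a}} =
      numDerangements (Fintype.card α) + numDerangements (Fintype.card α - 1) := by
  classical
  rw [Nat.card_congr (derangements.atMostOneFixedPointEquivSum_derangements a), Nat.card_sum,
    Nat.card_eq_fintype_card, Nat.card_eq_fintype_card, card_derangements_eq_numDerangements,
    card_derangements_eq_numDerangements, Fintype.card_compl_set, Set.card_singleton, add_comm]

theorem stmt_3 (n : ℕ) (hn : 1 ≤ n) :
    dCount n = numDerangements n + numDerangements (n - 1) := by
  obtain ⟨m, rfl⟩ := Nat.exists_eq_add_of_le' hn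
  let Φ : Perm (Fin (m + 1)) ≃ Perm (Fin (m + 1)) :=
    (adjacencyToExcedance (m + 1)).trans (Equiv.mulLeft (finRotate (m + 1))⁻¹)
  have avoidsSucc_iff (σ : Perm (Fin (m + 1))) :
      avoidsSucc (m + 1) σ ↔ fixedPoints (Φ σ) ⊆ {Fin.last m} := by
    simp only [avoidsSucc_iff_forall_not_covBy,
      ← adjacencyToExcedance_apply_eq_iff σ Fin.castSucc_lt_succ]
    exact fixedPoints_finRotate_inv_mul_subset_iff.symm
  have dCount_eq : dCount (m + 1) =
      Nat.card {f : Perm (Fin (m + 1)) // fixedPoints f ⊆ {Fin.last m}} :=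
    Nat.card_congr (Φ.subtypeEquiv avoidsSucc_iff)
  rw [dCount_eq, card_perm_fixedPoints_subset_singleton, Fintype.card_fin]
end

section
/- For every integer n ≥ 3, the recursion D_n = (n−1)·(D_{n−1} + D_{n−2}) + (−1)^{n−1} holds, as an identity in the integers. -/
/-!
Rotating the values modulo `n` permutes the arrangements counted by `D_n`, so `D_n = n * E_(n-1)`,
where `E_n` counts the arrangements of `0, …, n` that start with `0` and avoid all patterns
`i (i+1)`. Collapsing an occurrence of `i (i+1)` to a single letter shows that the numbers of
arrangements avoiding such patterns only at the first `k` places form the table of iterated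
differences of the factorials. Hence `E_n = Δⁿ(m!)(0)`, which is the number of derangements of `n`
letters, and the recursion for `D_n` follows from the classical ones for derangements.
-/

open Equiv
open scoped Nat fwdDiff

section FinAddOne

variable {n : ℕ}

lemma fin_eq_add_one_iff_val {a b : Fin (n + 1)} :
    b = a + 1 ↔ b.val = a.val + 1 ∨ (a.val = n ∧ b.val = 0) := by
  simp only [Fin.ext_iff, Fin.val_add_one, Fin.val_last]
  split_ifs <;> omega

lemma fin_succ_succAbove_eq_add_one_iff {a b c : Fin (n + 1)} (hbc : b ≠ c) :
    c.succ.succAbove a = c.succ.succAbove b + 1 ↔ a = b + 1 := by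
  have hbc' : b.val ≠ c.val := Fin.val_ne_of_ne hbc
  simp only [fin_eq_add_one_iff_val, Fin.succAbove, Fin.lt_def, Fin.val_castSucc, Fin.val_succ]
  split_ifs <;> simp only [Fin.val_castSucc, Fin.val_succ] <;> omega

end FinAddOne

section InsertPerm

variable {n : ℕ}

/-- The one-line notation of `e` with a new letter `p` inserted at position `k`; the letters of `e`
that are at least `p` are raised by one. -/
def insertPerm (k p : Fin (n + 1)) (e : Perm (Fin n)) : Perm (Fin (n + 1)) :=
  ((finSuccEquiv' k).trans e.optionCongr).trans (finSuccEquiv' p).symm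

@[simp]
lemma insertPerm_apply_self (k p : Fin (n + 1)) (e : Perm (Fin n)) : insertPerm k p e k = p := by
  simp [insertPerm]

@[simp]
lemma insertPerm_apply_succAbove (k p : Fin (n + 1)) (e : Perm (Fin n)) (i : Fin n) :
    insertPerm k p e (k.succAbove i) = p.succAbove (e i) := by
  simp [insertPerm]

lemma eq_of_insertPerm_eq {k p q : Fin (n + 1)} {e f : Perm (Fin n)}
    (h : insertPerm k p e = insertPerm k q f) : e = f := by
  obtain rfl : p = q := by simpa using DFunLike.congr_fun h k
  ext1 i
  simpa using DFunLike.congr_fun h (k.succAbove i)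

lemma exists_insertPerm_eq (k : Fin (n + 1)) (σ : Perm (Fin (n + 1))) :
    ∃ e, insertPerm k (σ k) e = σ := by
  let τ : Perm (Option (Fin n)) :=
    ((finSuccEquiv' k).symm.trans σ).trans (finSuccEquiv' (σ k))
  have hτ : (removeNone τ).optionCongr = τ := by
    have hnone : τ none = none := by simp [τ]
    rw [map_equiv_removeNone, hnone, swap_self, ← Perm.one_def, one_mul]
  refine ⟨removeNone τ, ?_⟩
  ext1 i
  simp [insertPerm, hτ, τ]

end InsertPerm

section CyclicSuccession

variable {n : ℕ}

/-- The letter at position `i + 1` of `σ` is the successor of the letter at position `i`, where the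
addition of `Fin (n + 1)` makes `0` the successor of `n`. -/
def IsCyclicSuccession (σ : Perm (Fin (n + 1))) (i : Fin n) : Prop :=
  σ i.succ = σ i.castSucc + 1

lemma avoidsSucc_and_not_containsN1_iff (σ : Perm (Fin (n + 1))) :
    avoidsSucc (n + 1) σ ∧ ¬ containsN1 (n + 1) σ ↔ ∀ i, ¬ IsCyclicSuccession σ i := by
  simp only [avoidsSucc, containsN1, IsCyclicSuccession, fin_eq_add_one_iff_val, not_or, not_exists,
    forall_and, Fin.forall_iff, Nat.add_lt_add_iff_right, Nat.add_sub_cancel]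
  rfl

lemma isCyclicSuccession_trans_addRight (σ : Perm (Fin (n + 1))) (a : Fin (n + 1)) (i : Fin n) :
    IsCyclicSuccession (σ.trans (Equiv.addRight a)) i ↔ IsCyclicSuccession σ i := by
  simp [IsCyclicSuccession, add_right_comm _ a 1]

end CyclicSuccession

section InsertSuccession

variable {n : ℕ}

/-- Split the letter `v` at position `k` of `e` into the two consecutive letters
`v (v + 1)`, raising the letters of `e` above `v` by one. -/
def insertSuccession (k : Fin (n + 1)) (e : Perm (Fin (n + 1))) : Perm (Fin (n + 2)) :=
  insertPerm k.succ (e k).succ e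

lemma insertSuccession_injective (k : Fin (n + 1)) :
    Function.Injective (insertSuccession k) := fun _ _ h ↦ eq_of_insertPerm_eq h

lemma insertSuccession_apply_zero_eq_zero_iff (k : Fin (n + 1)) (e : Perm (Fin (n + 1))) :
    insertSuccession k e 0 = 0 ↔ e 0 = 0 := by
  rw [← Fin.succ_succAbove_zero k, insertSuccession, insertPerm_apply_succAbove,
    Fin.succ_succAbove_zero, Fin.succAbove_eq_zero_iff (Fin.succ_ne_zero _)]

lemma isCyclicSuccession_insertSuccession_self (k : Fin (n + 1)) (e : Perm (Fin (n + 1))) :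
    IsCyclicSuccession (insertSuccession k e) k := by
  rw [IsCyclicSuccession, ← Fin.succAbove_succ_self, insertSuccession, insertPerm_apply_self,
    insertPerm_apply_succAbove, Fin.succAbove_succ_self, Fin.coeSucc_eq_succ]

lemma isCyclicSuccession_insertSuccession_iff {k : Fin (n + 1)} {i : Fin n} (hik : i.castSucc < k)
    (e : Perm (Fin (n + 1))) :
    IsCyclicSuccession (insertSuccession k e) i.castSucc ↔ IsCyclicSuccession e i := by
  have hsucc : k.succ.succAbove i.succ = i.castSucc.succ := by
    rw [Fin.succ_castSucc]
    exact Fin.succAbove_of_castSucc_lt _ _ (by simpa [Fin.lt_def] using hik)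
  have hcast : k.succ.succAbove i.castSucc = i.castSucc.castSucc :=
    Fin.succAbove_of_castSucc_lt _ _ (Fin.castSucc_lt_succ_iff.2 hik.le)
  rw [IsCyclicSuccession, IsCyclicSuccession, ← hsucc, ← hcast, insertSuccession,
    insertPerm_apply_succAbove, insertPerm_apply_succAbove,
    fin_succ_succAbove_eq_add_one_iff (e.injective.ne hik.ne)]

lemma exists_insertSuccession_eq {k : Fin (n + 1)} {σ : Perm (Fin (n + 2))} (h0 : σ 0 = 0)
    (hk : IsCyclicSuccession σ k) : ∃ e, insertSuccession k e = σ := by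
  obtain ⟨e, he⟩ := exists_insertPerm_eq k.succ σ
  obtain ⟨q, hq⟩ : ∃ q : Fin (n + 1), q.succ = σ k.succ :=
    Fin.exists_succ_eq.2 fun h ↦ Fin.succ_ne_zero k (σ.injective (h.trans h0.symm))
  rw [← hq] at he
  have hcast : σ k.castSucc = q.succ.succAbove (e k) := by
    rw [← he, ← Fin.succAbove_succ_self, insertPerm_apply_succAbove]
  have hqk : e k = q := by
    rw [IsCyclicSuccession, hcast, ← hq, ← Fin.coeSucc_eq_succ, add_left_inj, Fin.coeSucc_eq_succ,
      ← Fin.succAbove_succ_self] at hk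
    exact (Fin.succAbove_right_injective hk).symm
  exact ⟨e, by rw [insertSuccession, hqk, he]⟩

end InsertSuccession

section Counting

/-- The arrangements of `0, …, n` without cyclic successions at the first `k` positions. -/
def prefixAvoiders (n k : ℕ) : Set (Perm (Fin (n + 1))) :=
  {σ | ∀ i : Fin n, i.val < k → ¬ IsCyclicSuccession σ i}

/-- The arrangements in `prefixAvoiders n k` that start with the letter `0`, so that their cyclic
successions are the genuine patterns `i (i + 1)`. -/
def pointedAvoiders (n k : ℕ) : Set (Perm (Fin (n + 1))) :=
  {σ ∈ prefixAvoiders n k | σ 0 = 0}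

lemma ncard_prefixAvoiders (n k : ℕ) :
    (prefixAvoiders n k).ncard = (n + 1) * (pointedAvoiders n k).ncard := by
  have hrot (σ : Perm (Fin (n + 1))) (a : Fin (n + 1)) :
      σ.trans (Equiv.addRight a) ∈ prefixAvoiders n k ↔ σ ∈ prefixAvoiders n k := by
    simp only [prefixAvoiders, Set.mem_ofPred_eq, isCyclicSuccession_trans_addRight]
  let rotation : prefixAvoiders n k ≃ Fin (n + 1) × pointedAvoiders n k :=
    { toFun σ := (σ.1 0, ⟨σ.1.trans (Equiv.addRight (-σ.1 0)), (hrot _ _).2 σ.2, by simp⟩)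
      invFun p := ⟨p.2.1.trans (Equiv.addRight p.1), (hrot _ _).2 p.2.2.1⟩
      left_inv σ := by ext; simp
      right_inv p := by
        have h0 : p.2.1 0 = 0 := p.2.2.2
        ext <;> simp [h0] }
  simpa using Nat.card_congr rotation

lemma DCount_succ_eq_ncard (n : ℕ) : DCount (n + 1) = (prefixAvoiders n n).ncard := by
  rw [← Nat.card_coe_set_eq]
  refine Nat.card_congr (Equiv.subtypeEquivRight fun σ ↦ ?_)
  simp [avoidsSucc_and_not_containsN1_iff, prefixAvoiders]

lemma ncard_pointedAvoiders_zero (n : ℕ) : (pointedAvoiders n 0).ncard = n ! := by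
  have hrange : pointedAvoiders n 0 = Set.range (insertPerm 0 0) := by
    ext σ
    constructor
    · rintro ⟨-, h0⟩
      simpa only [h0] using! exists_insertPerm_eq 0 σ
    · rintro ⟨e, rfl⟩
      exact ⟨fun i hi ↦ absurd hi (Nat.not_lt_zero _), insertPerm_apply_self 0 0 e⟩
  rw [hrange, Set.ncard_range_of_injective fun _ _ ↦ eq_of_insertPerm_eq, Nat.card_perm,
    Nat.card_fin]

lemma insertSuccession_mem_pointedAvoiders_iff {n : ℕ} (k : Fin (n + 1))
    (e : Perm (Fin (n + 1))) :
    insertSuccession k e ∈ pointedAvoiders (n + 1) k ↔ e ∈ pointedAvoiders n k := by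
  refine and_congr ?_ (insertSuccession_apply_zero_eq_zero_iff k e)
  constructor
  · intro h i hi
    exact (isCyclicSuccession_insertSuccession_iff hi e).not.1 (h i.castSucc hi)
  · intro h i hi
    obtain ⟨j, rfl⟩ := Fin.exists_castSucc_eq.2 (Fin.ne_last_of_lt (Fin.lt_def.2 hi))
    exact (isCyclicSuccession_insertSuccession_iff hi e).not.2 (h j hi)

lemma image_insertSuccession_pointedAvoiders {n : ℕ} (k : Fin (n + 1)) :
    insertSuccession k '' pointedAvoiders n k =
      {σ ∈ pointedAvoiders (n + 1) k | IsCyclicSuccession σ k} := by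
  ext σ
  constructor
  · rintro ⟨e, he, rfl⟩
    exact ⟨(insertSuccession_mem_pointedAvoiders_iff k e).2 he,
      isCyclicSuccession_insertSuccession_self k e⟩
  · rintro ⟨hσ, hk⟩
    obtain ⟨e, rfl⟩ := exists_insertSuccession_eq hσ.2 hk
    exact ⟨e, (insertSuccession_mem_pointedAvoiders_iff k e).1 hσ, rfl⟩

lemma pointedAvoiders_succ {n : ℕ} (k : Fin n) :
    pointedAvoiders n (k + 1) = pointedAvoiders n k \ {σ | IsCyclicSuccession σ k} := by
  ext σ
  have hprefix : σ ∈ prefixAvoiders n (k + 1) ↔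
      σ ∈ prefixAvoiders n k ∧ ¬ IsCyclicSuccession σ k := by
    simp only [prefixAvoiders, Set.mem_ofPred_eq, Nat.lt_succ_iff_lt_or_eq, or_imp, forall_and,
      ← Fin.ext_iff, forall_eq]
  simp only [pointedAvoiders, Set.mem_sdiff, Set.mem_ofPred_eq, hprefix, and_right_comm]

lemma ncard_pointedAvoiders_add_succ_succ {n k : ℕ} (hk : k ≤ n) :
    (pointedAvoiders n k).ncard + (pointedAvoiders (n + 1) (k + 1)).ncard =
      (pointedAvoiders (n + 1) k).ncard := by
  lift k to Fin (n + 1) using Nat.lt_succ_of_le hk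
  rw [← Set.ncard_image_of_injective _ (insertSuccession_injective k),
    image_insertSuccession_pointedAvoiders, pointedAvoiders_succ]
  exact Set.ncard_inter_add_ncard_sdiff_eq_ncard _ _

theorem ncard_pointedAvoiders_eq_fwdDiff_iter (n k : ℕ) :
    ((pointedAvoiders (n + k) k).ncard : ℤ) = (Δ_[1])^[k] (fun m : ℕ ↦ (m ! : ℤ)) n := by
  induction k generalizing n with
  | zero => simp [ncard_pointedAvoiders_zero]
  | succ k ih =>
    rw [Function.iterate_succ_apply', fwdDiff, ← ih, ← ih, add_right_comm n 1 k,
      ← ncard_pointedAvoiders_add_succ_succ (Nat.le_add_left k n), ← add_assoc]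
    push_cast
    ring

theorem fwdDiff_iter_factorial_zero (n : ℕ) :
    (Δ_[1])^[n] (fun m : ℕ ↦ (m ! : ℤ)) 0 = numDerangements n := by
  rw [fwdDiff_iter_eq_sum_shift, numDerangements_sum, ← Finset.sum_flip]
  refine Finset.sum_congr rfl fun k hk ↦ ?_
  have hkn : k ≤ n := Finset.mem_range_succ_iff.1 hk
  rw [Nat.ascFactorial_eq_factorial_mul_choose, Nat.sub_sub_self hkn, Nat.add_sub_of_le hkn]
  simp only [smul_eq_mul, mul_one, zero_add, Nat.cast_mul]
  ring

theorem DCount_succ (n : ℕ) : DCount (n + 1) = (n + 1) * numDerangements n := by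
  have hpointed : (pointedAvoiders n n).ncard = numDerangements n := by
    have h := ncard_pointedAvoiders_eq_fwdDiff_iter 0 n
    rw [fwdDiff_iter_factorial_zero, Nat.zero_add] at h
    exact_mod_cast h
  rw [DCount_succ_eq_ncard, ncard_prefixAvoiders, hpointed]

end Counting

theorem stmt_8 (n : ℕ) (hn : 3 ≤ n) :
    (DCount n : ℤ) =
      ((n : ℤ) - 1) * ((DCount (n - 1) : ℤ) + (DCount (n - 2) : ℤ)) +
        (-1 : ℤ) ^ (n - 1) := by
  obtain ⟨m, rfl⟩ := Nat.exists_eq_add_of_le' hn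
  have hD : DCount (m + 3) = (m + 3) * numDerangements (m + 2) := DCount_succ (m + 2)
  have hD₁ : DCount (m + 3 - 1) = (m + 2) * numDerangements (m + 1) := DCount_succ (m + 1)
  have hD₂ : DCount (m + 3 - 2) = (m + 1) * numDerangements m := DCount_succ m
  have hsign : (-1 : ℤ) ^ (m + 3 - 1) = (-1) ^ m := by
    rw [Nat.add_sub_assoc (by norm_num), pow_add]
    norm_num
  rw [hD, hD₁, hD₂, hsign, numDerangements_add_two]
  push_cast
  rw [numDerangements_succ]
  ring
end
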